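/- arXiv:2601.13818 — 2 statements merged into one kernel-verified Lean document; each statement's English description precedes it below -/
import Mathlib

section
/- (Stationary solution of the FrBD_{n+1}-GKV model, Eqs. (18) and (20).) Consider the lumped FrBD_{n+1}-GKV model with constant input v_r ∈ ℝ² and regularisation parameter ε > 0, and set g := M(v_r)² v_r / ‖M(v_r) v_r‖_{2,ε}. Then the point z* = −Σ_{i=0}^n K_i⁻¹ g, z_i* = −K_i⁻¹ g (i = 1,…,n) is an equilibrium of the ODE system, i.e. the right-hand sides of all its equations vanish at (z*, z_1*, …, z_n*), and the corresponding stationary total bristle force equals f = K₀ (z* − Σ_{i=1}^n z_i*) = −M(v_r)² v_r / ‖M(v_r) v_r‖_{2,ε}. -/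
/-!
The friction term is linear in the total force `f`, so the bristle equation is at rest exactly when
`f = -g`. A Kelvin-Voigt element at rest carries the full force through its spring alone, whence
`K_i z_i = f`; the elements thus deform like springs in series, and `z` is the sum of their
deflections and that of the spring `K₀`.
-/

open Matrix

/-- The regularised Euclidean norm `‖y‖_{2,ε} = √(‖y‖₂² + ε)` on `ℝ²`. -/
noncomputable def regNorm (ε : ℝ) (y : Fin 2 → ℝ) : ℝ := Real.sqrt (y ⬝ᵥ y + ε)

section GeneralisedKelvinVoigt

variable {m ι R 𝕜 : Type*} [Fintype m] [Fintype ι] [CommRing R] [Field 𝕜]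

/-- The total bristle force `f = K₀ (z - ∑ zᵢ)`; here and below `w` is the family of internal
deformations `zᵢ`. -/
def bristleForce (K₀ : Matrix m m R) (z : m → R) (w : ι → m → R) : m → R :=
  K₀ *ᵥ (z - ∑ i, w i)

variable [DecidableEq m]

/-- The right-hand side of the bristle equation at relative velocity `v`. The scalar `r` stands for
`‖M(v) v‖_{2,ε}` and the matrix `G` for `M(v)²`. -/
noncomputable def bristleRate (r : R) (G K₀ : Matrix m m R) (v z : m → R)
    (w : ι → m → R) : m → R :=
  -(r • (G⁻¹ *ᵥ bristleForce K₀ z w)) - v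

/-- The right-hand side of the equation of the `i`-th Kelvin-Voigt element. -/
noncomputable def internalRate (K₀ : Matrix m m R) (K C : ι → Matrix m m R) (z : m → R)
    (w : ι → m → R) (i : ι) : m → R :=
  -(((C i)⁻¹ * K i) *ᵥ w i) + ((C i)⁻¹ * K₀) *ᵥ (z - ∑ j, w j)

/-- The state `(z, w)` is an equilibrium of the GKV system at constant relative velocity `v`; `r`
and `G` are as in `bristleRate`. -/
def IsGKVEquilibrium (r : R) (G K₀ : Matrix m m R) (K C : ι → Matrix m m R) (v z : m → R)
    (w : ι → m → R) : Prop :=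
  bristleRate r G K₀ v z w = 0 ∧ ∀ i, internalRate K₀ K C z w i = 0

theorem inv_mulVec_eq_iff {A : Matrix m m R} (hA : IsUnit A) {x y : m → R} :
    A⁻¹ *ᵥ x = y ↔ x = A *ᵥ y := by
  have hdet : IsUnit A.det := A.isUnit_iff_isUnit_det.mp hA
  constructor
  · rintro rfl
    rw [mulVec_mulVec, mul_nonsing_inv A hdet, one_mulVec]
  · rintro rfl
    rw [mulVec_mulVec, nonsing_inv_mul A hdet, one_mulVec]

theorem bristleRate_eq_zero_iff {r : 𝕜} (hr : r ≠ 0) {G : Matrix m m 𝕜} (hG : IsUnit G)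
    (K₀ : Matrix m m 𝕜) (v z : m → 𝕜) (w : ι → m → 𝕜) :
    bristleRate r G K₀ v z w = 0 ↔ bristleForce K₀ z w = -(r⁻¹ • (G *ᵥ v)) :=
  calc bristleRate r G K₀ v z w = 0
    _ ↔ r • (G⁻¹ *ᵥ bristleForce K₀ z w) = -v := by
      rw [bristleRate, sub_eq_zero, neg_eq_iff_eq_neg]
    _ ↔ G⁻¹ *ᵥ bristleForce K₀ z w = r⁻¹ • -v := (eq_inv_smul_iff₀ hr).symm
    _ ↔ bristleForce K₀ z w = -(r⁻¹ • (G *ᵥ v)) := by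
      rw [inv_mulVec_eq_iff hG, mulVec_smul, mulVec_neg, smul_neg]

theorem internalRate_eq_zero_iff (K₀ : Matrix m m R) (K : ι → Matrix m m R)
    {C : ι → Matrix m m R} (z : m → R) (w : ι → m → R) {i : ι} (hC : IsUnit (C i)) :
    internalRate K₀ K C z w i = 0 ↔ K i *ᵥ w i = bristleForce K₀ z w := by
  have rate_eq : internalRate K₀ K C z w i = (C i)⁻¹ *ᵥ (bristleForce K₀ z w - K i *ᵥ w i) := by
    rw [internalRate, bristleForce, mulVec_sub (C i)⁻¹, mulVec_mulVec, mulVec_mulVec,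
      neg_add_eq_sub]
  rw [rate_eq, inv_mulVec_eq_iff hC, mulVec_zero, sub_eq_zero, eq_comm]

theorem bristleForce_eq_iff {K₀ : Matrix m m R} (hK₀ : IsUnit K₀) (z : m → R) (w : ι → m → R)
    (f : m → R) : bristleForce K₀ z w = f ↔ z = K₀⁻¹ *ᵥ f + ∑ i, w i := by
  rw [bristleForce, eq_comm, ← inv_mulVec_eq_iff hK₀, eq_comm, sub_eq_iff_eq_add]

theorem isGKVEquilibrium_iff_bristleForce_eq {r : 𝕜} (hr : r ≠ 0)
    {G K₀ : Matrix m m 𝕜} (hG : IsUnit G) {K C : ι → Matrix m m 𝕜}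
    (hK : ∀ i, IsUnit (K i)) (hC : ∀ i, IsUnit (C i)) (v z : m → 𝕜) (w : ι → m → 𝕜) :
    IsGKVEquilibrium r G K₀ K C v z w ↔
      bristleForce K₀ z w = -(r⁻¹ • (G *ᵥ v)) ∧
        w = fun i => -((K i)⁻¹ *ᵥ (r⁻¹ • (G *ᵥ v))) := by
  rw [IsGKVEquilibrium, bristleRate_eq_zero_iff hr hG]
  refine and_congr_right fun hf => ?_
  simp only [internalRate_eq_zero_iff K₀ K z w (hC _), hf, funext_iff (f := w), ← mulVec_neg]
  exact forall_congr' fun i => by rw [eq_comm, ← inv_mulVec_eq_iff (hK i), eq_comm]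

theorem frbd_gkv_stationary_solution_general {r : 𝕜} (hr : r ≠ 0) {G K₀ : Matrix m m 𝕜}
    (hG : IsUnit G) (hK₀ : IsUnit K₀) {K C : ι → Matrix m m 𝕜} (hK : ∀ i, IsUnit (K i))
    (hC : ∀ i, IsUnit (C i)) (v : m → 𝕜) :
    let g : m → 𝕜 := r⁻¹ • (G *ᵥ v)
    let zstar : m → 𝕜 := -(K₀⁻¹ *ᵥ g + ∑ i, (K i)⁻¹ *ᵥ g)
    let wstar : ι → m → 𝕜 := fun i => -((K i)⁻¹ *ᵥ g)
    (∀ z w, IsGKVEquilibrium r G K₀ K C v z w ↔ z = zstar ∧ w = wstar) ∧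
      bristleForce K₀ zstar wstar = -g := by
  intro g zstar wstar
  have force_iff (z : m → 𝕜) : bristleForce K₀ z wstar = -g ↔ z = zstar := by
    have zstar_eq : K₀⁻¹ *ᵥ -g + ∑ i, wstar i = zstar := by
      simp only [zstar, wstar, mulVec_neg, Finset.sum_neg_distrib, neg_add]
    rw [bristleForce_eq_iff hK₀, zstar_eq]
  refine ⟨fun z w => ?_, (force_iff zstar).mpr rfl⟩
  rw [isGKVEquilibrium_iff_bristleForce_eq hr hG hK hC]
  exact and_congr_left fun hw => hw ▸ force_iff z

end GeneralisedKelvinVoigt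

theorem regNorm_pos {ε : ℝ} (hε : 0 < ε) (y : Fin 2 → ℝ) : 0 < regNorm ε y :=
  Real.sqrt_pos.mpr (add_pos_of_nonneg_of_pos (dotProduct_star_self_nonneg y) hε)

/-- Stationary solution of the lumped FrBD_{n+1}-GKV model (Eqs. (18) and (20)). -/
theorem frbd_gkv_stationary_solution (n : ℕ)
    (K₀ : Matrix (Fin 2) (Fin 2) ℝ) (K C : Fin n → Matrix (Fin 2) (Fin 2) ℝ)
    (hK₀ : K₀.PosDef) (hK : ∀ i, (K i).PosDef) (hC : ∀ i, (C i).PosDef)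
    (M : (Fin 2 → ℝ) → Matrix (Fin 2) (Fin 2) ℝ) (hM : ∀ y, (M y).PosDef)
    (ε : ℝ) (hε : 0 < ε) (vr : Fin 2 → ℝ) :
    let g : Fin 2 → ℝ :=
      (regNorm ε ((M vr).mulVec vr))⁻¹ • ((M vr * M vr).mulVec vr)
    let zstar : Fin 2 → ℝ := -(K₀⁻¹.mulVec g + ∑ i, (K i)⁻¹.mulVec g)
    let zistar : Fin n → (Fin 2 → ℝ) := fun i => -((K i)⁻¹.mulVec g)
    let rhsz : Fin 2 → ℝ :=
      -(regNorm ε ((M vr).mulVec vr) •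
        ((M vr * M vr)⁻¹.mulVec (K₀.mulVec (zstar - ∑ i, zistar i)))) - vr
    -- the right-hand side of the bristle equation vanishes
    rhsz = 0 ∧
    -- the right-hand sides of the internal-deformation equations vanish
    (∀ i, -(((C i)⁻¹ * K i).mulVec (zistar i)) +
        ((C i)⁻¹ * K₀).mulVec (zstar - ∑ j, zistar j) = 0) ∧
    -- the stationary total bristle force
    K₀.mulVec (zstar - ∑ i, zistar i) =
      -((regNorm ε ((M vr).mulVec vr))⁻¹ • ((M vr * M vr).mulVec vr)) := by
  obtain ⟨equilibrium_iff, force_eq⟩ := frbd_gkv_stationary_solution_general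
    (regNorm_pos hε (M vr *ᵥ vr)).ne' ((hM vr).isUnit.mul (hM vr).isUnit) hK₀.isUnit
    (fun i => (hK i).isUnit) (fun i => (hC i).isUnit) vr
  obtain ⟨bristle_rest, internal_rest⟩ := (equilibrium_iff _ _).mpr ⟨rfl, rfl⟩
  exact ⟨bristle_rest, internal_rest, force_eq⟩
end

section
/- (Pointwise energy-dissipation inequality for the standard linear FrBD_{n+1}-GM model; core of Lemma 5.1.) Let Ω ⊆ ℝ³ be open (with coordinates (x, y, s)), let ε ≥ 0, let v̄ : Ω → ℝ² be a function, V_r : ℝ → ℝ with V_r(s) > 0, and let z, f_1, …, f_n : Ω → ℝ² be differentiable functions satisfying the standard linear FrBD_{n+1}-GM equations at every point of Ω. Define the energy density q := ½ zᵀ K₀ z + ½ Σ_{i=1}^n f_iᵀ K_i⁻¹ f_i and the total force f := K₀ z + Σ_{i=1}^n f_i. Then at every point of Ω one has ∂q/∂s − ∂q/∂x ≤ −fᵀ v̄. -/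
open Matrix

/-!
Let `R` be the friction operator, so that the bristle equation reads `D z = -(R F) - v̄`, where
`F` is the total force. Multiplying the branch equation `D fᵢ = -(1/V_r) Kᵢ Cᵢ⁻¹ fᵢ + Kᵢ D z` by
`Kᵢ⁻¹` cancels the stiffness in both terms, so the branches contribute `∑ fᵢ · D z` to the power,
which combines with `K₀ z · D z` into `F · D z`. This gives the balance
`D q = -(F · v̄) - F · R F - (1/V_r) ∑ fᵢ · Cᵢ⁻¹ fᵢ`, whose last two terms are nonpositive.
-/

section QuadraticForms

variable {ι : Type*} [Fintype ι]

lemma mulVec_dotProduct_eq_of_isSymm {α : Type*} [CommSemiring α] {A : Matrix ι ι α}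
    (hA : A.IsSymm) (u v : ι → α) : A *ᵥ u ⬝ᵥ v = u ⬝ᵥ A *ᵥ v := by
  rw [dotProduct_mulVec, ← mulVec_transpose, hA.eq]

lemma posSemidef_inv_mul_self [DecidableEq ι] {α : Type*} [CommRing α] [PartialOrder α]
    [StarRing α] [StarOrderedRing α] {A : Matrix ι ι α} (hA : A.IsHermitian) :
    (A * A)⁻¹.PosSemidef := by
  have hAA : (Aᴴ * A).PosSemidef := posSemidef_conjTranspose_mul_self A
  rw [hA.eq] at hAA
  exact hAA.inv

variable {𝕜 : Type*} [NontriviallyNormedField 𝕜] {u v : 𝕜 → ι → 𝕜} {u' v' : ι → 𝕜} {t : 𝕜}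

lemma hasDerivAt_dotProduct (hu : HasDerivAt u u' t) (hv : HasDerivAt v v' t) :
    HasDerivAt (fun t' => u t' ⬝ᵥ v t') (u' ⬝ᵥ v t + u t ⬝ᵥ v') t := by
  simp only [dotProduct, ← Finset.sum_add_distrib]
  exact HasDerivAt.fun_sum fun i _ => (hasDerivAt_pi.1 hu i).fun_mul (hasDerivAt_pi.1 hv i)

lemma hasDerivAt_mulVec {m : Type*} [Finite m] (A : Matrix m ι 𝕜) (hu : HasDerivAt u u' t) :
    HasDerivAt (fun t' => A *ᵥ u t') (A *ᵥ u') t := by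
  cases nonempty_fintype m
  exact hasDerivAt_pi.2 fun _ => HasDerivAt.fun_sum fun j _ => (hasDerivAt_pi.1 hu j).const_mul _

lemma hasDerivAt_dotProduct_mulVec_self {A : Matrix ι ι 𝕜} (hA : A.IsSymm)
    (hu : HasDerivAt u u' t) :
    HasDerivAt (fun t' => u t' ⬝ᵥ A *ᵥ u t') (2 * (u t ⬝ᵥ A *ᵥ u')) t := by
  refine (hasDerivAt_dotProduct hu (hasDerivAt_mulVec A hu)).congr_deriv ?_
  rw [dotProduct_comm u', mulVec_dotProduct_eq_of_isSymm hA, two_mul]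

end QuadraticForms

section GeneralizedMaxwell

variable {ι κ : Type*} [Fintype ι] [Fintype κ]

/-- The total force `K₀ z + ∑ᵢ fᵢ` of a generalised Maxwell element with elastic stiffness `K₀`,
deflection `z` and branch forces `fᵢ`. -/
def gmForce (K₀ : Matrix ι ι ℝ) (z : ι → ℝ) (f : κ → ι → ℝ) : ι → ℝ :=
  K₀ *ᵥ z + ∑ i, f i

variable [DecidableEq ι]

/-- The energy `½ zᵀ K₀ z + ½ ∑ᵢ fᵢᵀ Kᵢ⁻¹ fᵢ` stored in a generalised Maxwell element. -/
noncomputable def gmEnergy (K₀ : Matrix ι ι ℝ) (K : κ → Matrix ι ι ℝ) (z : ι → ℝ)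
    (f : κ → ι → ℝ) : ℝ :=
  (1/2) * (z ⬝ᵥ K₀ *ᵥ z) + (1/2) * ∑ i, f i ⬝ᵥ (K i)⁻¹ *ᵥ f i

/-- The differential of `gmEnergy K₀ K` at the state `(z, f)`, evaluated at the rate `(z', f')`. -/
noncomputable def gmPower (K₀ : Matrix ι ι ℝ) (K : κ → Matrix ι ι ℝ) (z : ι → ℝ)
    (f : κ → ι → ℝ) (z' : ι → ℝ) (f' : κ → ι → ℝ) : ℝ :=
  z ⬝ᵥ K₀ *ᵥ z' + ∑ i, f i ⬝ᵥ (K i)⁻¹ *ᵥ f' i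

lemma gmPower_sub (K₀ : Matrix ι ι ℝ) (K : κ → Matrix ι ι ℝ) (z z₁ z₂ : ι → ℝ)
    (f f₁ f₂ : κ → ι → ℝ) :
    gmPower K₀ K z f (z₁ - z₂) (f₁ - f₂) = gmPower K₀ K z f z₁ f₁ - gmPower K₀ K z f z₂ f₂ := by
  simp only [gmPower, Pi.sub_apply, mulVec_sub, dotProduct_sub, Finset.sum_sub_distrib]
  ring

lemma hasDerivAt_gmEnergy {K₀ : Matrix ι ι ℝ} {K : κ → Matrix ι ι ℝ} (hK₀ : K₀.IsSymm)
    (hK : ∀ i, (K i).IsSymm) {z : ℝ → ι → ℝ} {f : κ → ℝ → ι → ℝ} {z' : ι → ℝ} {f' : κ → ι → ℝ}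
    {t : ℝ} (hz : HasDerivAt z z' t) (hf : ∀ i, HasDerivAt (f i) (f' i) t) :
    HasDerivAt (fun t' => gmEnergy K₀ K (z t') fun i => f i t')
      (gmPower K₀ K (z t) (fun i => f i t) z' f') t := by
  have hBranches := HasDerivAt.fun_sum fun i (_ : i ∈ Finset.univ) =>
    hasDerivAt_dotProduct_mulVec_self (hK i).inv (hf i)
  refine (((hasDerivAt_dotProduct_mulVec_self hK₀ hz).const_mul (1/2)).add
    (hBranches.const_mul (1/2))).congr_deriv ?_
  rw [gmPower, ← Finset.mul_sum]
  ring

lemma inv_mulVec_maxwell_rate {α : Type*} [CommRing α] {K : Matrix ι ι α} (hK : IsUnit K)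
    (C : Matrix ι ι α) (r : α) (u w : ι → α) :
    K⁻¹ *ᵥ (-(r • ((C * K⁻¹)⁻¹ *ᵥ u)) + K *ᵥ w) = -(r • (C⁻¹ *ᵥ u)) + w := by
  have hdet : IsUnit K.det := (isUnit_iff_isUnit_det K).1 hK
  rw [Matrix.mul_inv_rev, nonsing_inv_nonsing_inv K hdet, mulVec_add, mulVec_neg, mulVec_smul,
    mulVec_mulVec, mulVec_mulVec, nonsing_inv_mul_cancel_left K C⁻¹ hdet, nonsing_inv_mul K hdet,
    one_mulVec]

lemma gmPower_eq_neg_dotProduct_sub {K₀ R : Matrix ι ι ℝ} {K C : κ → Matrix ι ι ℝ} (hK₀ : K₀.IsSymm)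
    (hK : ∀ i, IsUnit (K i)) {r : ℝ} {v z z' : ι → ℝ} {f f' : κ → ι → ℝ}
    (hz : z' = -(R *ᵥ gmForce K₀ z f) - v)
    (hf : ∀ i, f' i = -(r • ((C i * (K i)⁻¹)⁻¹ *ᵥ f i)) + K i *ᵥ z') :
    gmPower K₀ K z f z' f' =
      -(gmForce K₀ z f ⬝ᵥ v) - gmForce K₀ z f ⬝ᵥ R *ᵥ gmForce K₀ z f -
        r * ∑ i, f i ⬝ᵥ (C i)⁻¹ *ᵥ f i := by
  have hBranch (i : κ) :
      f i ⬝ᵥ (K i)⁻¹ *ᵥ f' i = f i ⬝ᵥ z' - r * (f i ⬝ᵥ (C i)⁻¹ *ᵥ f i) := by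
    rw [hf, inv_mulVec_maxwell_rate (hK i), dotProduct_add, dotProduct_neg, dotProduct_smul,
      smul_eq_mul, neg_add_eq_sub]
  calc gmPower K₀ K z f z' f'
      = gmForce K₀ z f ⬝ᵥ z' - r * ∑ i, f i ⬝ᵥ (C i)⁻¹ *ᵥ f i := by
        simp only [gmPower, gmForce, hBranch, Finset.sum_sub_distrib, ← Finset.mul_sum,
          add_dotProduct, sum_dotProduct, mulVec_dotProduct_eq_of_isSymm hK₀, add_sub_assoc]
    _ = _ := by
        rw [hz, dotProduct_sub, dotProduct_neg]
        ring

lemma gmPower_le_neg_dotProduct {K₀ R : Matrix ι ι ℝ} {K C : κ → Matrix ι ι ℝ} (hK₀ : K₀.IsSymm)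
    (hK : ∀ i, IsUnit (K i)) (hC : ∀ i, (C i).PosDef) (hR : R.PosSemidef) {r : ℝ} (hr : 0 ≤ r)
    {v z z' : ι → ℝ} {f f' : κ → ι → ℝ} (hz : z' = -(R *ᵥ gmForce K₀ z f) - v)
    (hf : ∀ i, f' i = -(r • ((C i * (K i)⁻¹)⁻¹ *ᵥ f i)) + K i *ᵥ z') :
    gmPower K₀ K z f z' f' ≤ -(gmForce K₀ z f ⬝ᵥ v) := by
  have hFriction : 0 ≤ gmForce K₀ z f ⬝ᵥ R *ᵥ gmForce K₀ z f :=
    hR.dotProduct_mulVec_nonneg _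
  have hRelaxation : 0 ≤ r * ∑ i, f i ⬝ᵥ (C i)⁻¹ *ᵥ f i :=
    mul_nonneg hr <| Finset.sum_nonneg fun i _ =>
      (hC i).inv.posSemidef.dotProduct_mulVec_nonneg (f i)
  rw [gmPower_eq_neg_dotProduct_sub hK₀ hK hz hf]
  linarith

/-- The friction law enters only through a positive semidefinite operator `R`; the FrBD model has
`R = -Ψ`. -/
theorem frbd_gm_pointwise_dissipation_general {K₀ : Matrix ι ι ℝ} {K C : κ → Matrix ι ι ℝ}
    (hK₀ : K₀.IsSymm) (hK : ∀ i, (K i).IsSymm) (hKunit : ∀ i, IsUnit (K i))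
    (hC : ∀ i, (C i).PosDef) {R : ℝ → ℝ → ℝ → Matrix ι ι ℝ} {Ω : Set (ℝ × ℝ × ℝ)}
    (hR : ∀ x y s, (x, y, s) ∈ Ω → (R x y s).PosSemidef)
    {vb : ℝ → ℝ → ℝ → ι → ℝ} {Vr : ℝ → ℝ} (hVr : ∀ s, 0 < Vr s)
    {z zx zs : ℝ → ℝ → ℝ → ι → ℝ} {f fx fs : κ → ℝ → ℝ → ℝ → ι → ℝ}
    (hzx : ∀ x y s, (x, y, s) ∈ Ω → HasDerivAt (fun x' => z x' y s) (zx x y s) x)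
    (hzs : ∀ x y s, (x, y, s) ∈ Ω → HasDerivAt (fun s' => z x y s') (zs x y s) s)
    (hfx : ∀ i x y s, (x, y, s) ∈ Ω → HasDerivAt (fun x' => f i x' y s) (fx i x y s) x)
    (hfs : ∀ i x y s, (x, y, s) ∈ Ω → HasDerivAt (fun s' => f i x y s') (fs i x y s) s)
    (hPDEz : ∀ x y s, (x, y, s) ∈ Ω →
      zs x y s - zx x y s =
        -(R x y s *ᵥ gmForce K₀ (z x y s) fun i => f i x y s) - vb x y s)
    (hPDEf : ∀ i x y s, (x, y, s) ∈ Ω →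
      fs i x y s - fx i x y s =
        -((Vr s)⁻¹ • ((C i * (K i)⁻¹)⁻¹ *ᵥ f i x y s)) + K i *ᵥ (zs x y s - zx x y s)) :
    ∀ x y s, (x, y, s) ∈ Ω →
      ∃ qx qs : ℝ,
        HasDerivAt (fun x' => gmEnergy K₀ K (z x' y s) fun i => f i x' y s) qx x ∧
        HasDerivAt (fun s' => gmEnergy K₀ K (z x y s') fun i => f i x y s') qs s ∧
        qs - qx ≤ -((gmForce K₀ (z x y s) fun i => f i x y s) ⬝ᵥ vb x y s) := by
  intro x y s hp
  refine ⟨_, _, hasDerivAt_gmEnergy hK₀ hK (hzx x y s hp) fun i => hfx i x y s hp,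
    hasDerivAt_gmEnergy hK₀ hK (hzs x y s hp) fun i => hfs i x y s hp, ?_⟩
  rw [← gmPower_sub]
  exact gmPower_le_neg_dotProduct hK₀ hKunit hC (hR x y s hp) (inv_nonneg.2 (hVr s).le)
    (hPDEz x y s hp) fun i => hPDEf i x y s hp

end GeneralizedMaxwell

/-- Pointwise energy-dissipation inequality for the standard linear FrBD_{n+1}-GM model
(core of Lemma 5.1): along the characteristic field `D = ∂/∂s − ∂/∂x`, the energy density
`q = ½ zᵀK₀z + ½ Σᵢ fᵢᵀKᵢ⁻¹fᵢ` satisfies `∂q/∂s − ∂q/∂x ≤ −fᵀ v̄` at every point of `Ω`. -/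
theorem frbd_gm_pointwise_dissipation (n : ℕ)
    (K₀ : Matrix (Fin 2) (Fin 2) ℝ) (K C : Fin n → Matrix (Fin 2) (Fin 2) ℝ)
    (hK₀ : K₀.PosDef) (hK : ∀ i, (K i).PosDef) (hC : ∀ i, (C i).PosDef)
    (Mm : (Fin 2 → ℝ) → Matrix (Fin 2) (Fin 2) ℝ) (hMm : ∀ y, (Mm y).PosDef)
    (ε : ℝ) (hε : 0 ≤ ε)
    (Ω : Set (ℝ × ℝ × ℝ)) (hΩ : IsOpen Ω)
    (vb : ℝ → ℝ → ℝ → (Fin 2 → ℝ))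
    (Vr : ℝ → ℝ) (hVr : ∀ s, 0 < Vr s)
    (z : ℝ → ℝ → ℝ → (Fin 2 → ℝ)) (f : Fin n → ℝ → ℝ → ℝ → (Fin 2 → ℝ))
    (zx zs : ℝ → ℝ → ℝ → (Fin 2 → ℝ)) (fx fs : Fin n → ℝ → ℝ → ℝ → (Fin 2 → ℝ))
    -- partial derivatives of the states
    (hzx : ∀ x y s, (x, y, s) ∈ Ω → HasDerivAt (fun x' => z x' y s) (zx x y s) x)
    (hzs : ∀ x y s, (x, y, s) ∈ Ω → HasDerivAt (fun s' => z x y s') (zs x y s) s)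
    (hfx : ∀ i x y s, (x, y, s) ∈ Ω → HasDerivAt (fun x' => f i x' y s) (fx i x y s) x)
    (hfs : ∀ i x y s, (x, y, s) ∈ Ω → HasDerivAt (fun s' => f i x y s') (fs i x y s) s)
    -- the standard linear FrBD_{n+1}-GM equations: D z = Ψ f − v̄
    (hPDEz : ∀ x y s, (x, y, s) ∈ Ω →
      zs x y s - zx x y s =
        -(((Vr s)⁻¹ *
            regNorm ε ((Mm (Vr s • vb x y s)).mulVec (Vr s • vb x y s))) •
          ((Mm (Vr s • vb x y s) * Mm (Vr s • vb x y s))⁻¹.mulVec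
            (K₀.mulVec (z x y s) + ∑ i, f i x y s))) - vb x y s)
    -- and D fᵢ = −(1/V_r) τᵢ⁻¹ fᵢ + Kᵢ D z
    (hPDEf : ∀ i x y s, (x, y, s) ∈ Ω →
      fs i x y s - fx i x y s =
        -((Vr s)⁻¹ • ((C i * (K i)⁻¹)⁻¹.mulVec (f i x y s))) +
          (K i).mulVec (zs x y s - zx x y s)) :
    ∀ x y s, (x, y, s) ∈ Ω →
      ∃ qx qs : ℝ,
        HasDerivAt (fun x' => (1/2) * (z x' y s ⬝ᵥ K₀.mulVec (z x' y s)) +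
          (1/2) * ∑ i, f i x' y s ⬝ᵥ (K i)⁻¹.mulVec (f i x' y s)) qx x ∧
        HasDerivAt (fun s' => (1/2) * (z x y s' ⬝ᵥ K₀.mulVec (z x y s')) +
          (1/2) * ∑ i, f i x y s' ⬝ᵥ (K i)⁻¹.mulVec (f i x y s')) qs s ∧
        qs - qx ≤ -((K₀.mulVec (z x y s) + ∑ i, f i x y s) ⬝ᵥ vb x y s) := by
  have hR (y w : Fin 2 → ℝ) (s : ℝ) :
      (((Vr s)⁻¹ * regNorm ε w) • (Mm y * Mm y)⁻¹).PosSemidef :=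
    (posSemidef_inv_mul_self (hMm y).isHermitian).smul
      (mul_nonneg (inv_nonneg.2 (hVr s).le) (Real.sqrt_nonneg _))
  simp only [← smul_mulVec] at hPDEz
  exact frbd_gm_pointwise_dissipation_general (isHermitian_iff_isSymm.1 hK₀.isHermitian)
    (fun i => isHermitian_iff_isSymm.1 (hK i).isHermitian) (fun i => (hK i).isUnit) hC
    (fun _ _ _ _ => hR _ _ _) hVr hzx hzs hfx hfs hPDEz hPDEf
end
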